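/- Under the same setting: let m, n ≥ 1, let p_-, q_-, p_+, q_+ ∈ ℝ with -1 < p_± ≤ q_± < 1, a_± = p_± q_±, b_± = p_± + q_±, Λ^{(m,n)} := {λ ∈ ℤⁿ : m ≥ λ_1 ≥ ⋯ ≥ λ_n ≥ 0}, ξ_i^{(m+n-1)} the unique real solution of 2(m+n-1)ξ + v_{p_-}(ξ)+v_{q_-}(ξ)+v_{p_+}(ξ)+v_{q_+}(ξ) = 2π(i+1), ξ_λ̂^{(m,n)} := (ξ^{(m+n-1)}_{λ̂_1+n-1},…,ξ^{(m+n-1)}_{λ̂_n}), P_λ(ξ) := det[p_{n-j+λ_j}(ξ_k)]_{1≤j,k≤n}/V(ξ) with p_l(ξ) := U_l(cos ξ) - b_- U_{l-1}(cos ξ) + a_- U_{l-2}(cos ξ) and V(ξ) := ∏_{j<k} 2(cos ξ_j - cos ξ_k), Δ_λ^{(m,n)} := (1-a_- δ_{λ_n,0})^{-1}(1-a_+ δ_{λ_1,m})^{-1}, C(ξ) := ∏_j (1-p_- e^{-iξ_j})(1-q_- e^{-iξ_j})/(1-e^{-2iξ_j}) · ∏_{j<k}(1-e^{-i(ξ_j+ξ_k)})^{-1}(1-e^{-i(ξ_j-ξ_k)})^{-1},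 H^{(m,n)}(ξ) := ∏_j ( 2(m+n-1) + ∑_{q∈{p_-,q_-,p_+,q_+}} (1-q²)/(1-2q cos ξ_j + q²) ), Δ̂_λ̂^{(m,n)} := 1/( C(ξ_λ̂^{(m,n)}) C(-ξ_λ̂^{(m,n)}) H^{(m,n)}(ξ_λ̂^{(m,n)}) ). Then the dual orthogonality relations hold: for all λ, μ ∈ Λ^{(m,n)}, ∑_{λ̂ ∈ Λ^{(m,n)}} P_λ(ξ_λ̂^{(m,n)}) P_μ(ξ_λ̂^{(m,n)}) Δ̂_λ̂^{(m,n)} = 0 if μ ≠ λ, and = 1/Δ_λ^{(m,n)} if μ = λ. -/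

import Mathlib

/-!
The proof reduces the multivariate relations to one variable by the Cauchy–Binet formula.

Put `M = m + n - 1`. The shift `λ ↦ (λ_j + n - 1 - j)_j` identifies `Λ^{(m,n)}` with the strictly
decreasing sequences in `{0, …, M}` (`shiftLam_bijective`). In `C(ξ) C(-ξ)` the pairwise factors
are `V(ξ)⁻²` (`CC_mul_CC_neg`), which cancels the denominators of `P_λ P_μ`. What remains is a sum
over column sets of products of two maximal minors of the square matrix `p_l(ξ_i)`,
`0 ≤ l, i ≤ M`, so that it suffices to show that the rows of this matrix are orthogonal for the
weights `1 / (c(ξ_i) c(-ξ_i) H(ξ_i))` (`sum_minors`, `dual_orth`).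

A one-sided inverse of a square matrix is two-sided, so this follows from orthogonality of the
columns, where the row `l` carries the weight `1 / nrm l`. With `z = e^{iξ}` one has
`e^{i v_q(ξ)} = (z - q) / (1 - q z)`, so every node satisfies the Bethe equation
`z^{2M} ∏ (z - q) = ∏ (1 - q z)` over the four parameters (`exp_v`, `bethe`). By the plane-wave
formula `p_l = c zˡ + c̄ z⁻ˡ` this implies the boundary condition
`p_{M+1} - b₊ p_M + a₊ p_{M-1} = 0` (`bs_exp`, `boundary`). Distinct columns are then orthogonal by
the Christoffel–Darboux identity (`kernel_offdiag`). On the diagonal the squares sum to geometric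
series, whose ends are converted by the Bethe equation, leaving `c c̄ H` (`diag_sum`,
`kernel_diag`). The nodes lie in `(0, π)` because the phases `v_q` are increasing and fix `0` and
`π` (`node_mem`), so their cosines are distinct.
-/

/-- The function `v_q(ξ) = ∫_0^ξ (1-q²)/(1-2q cos x + q²) dx`. -/
noncomputable def v (q ξ : ℝ) : ℝ :=
  ∫ x in (0:ℝ)..ξ, (1 - q^2) / (1 - 2*q*Real.cos x + q^2)

/-- The Bernstein–Szegő polynomial `p_l(ξ) = U_l(cos ξ) - b₋ U_{l-1}(cos ξ) + a₋ U_{l-2}(cos ξ)`,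
with the Chebyshev polynomials of the second kind indexed by `ℤ`. -/
noncomputable def bs (am bm : ℝ) (l : ℤ) (ξ : ℝ) : ℝ :=
  (Polynomial.Chebyshev.U ℝ l).eval (Real.cos ξ)
    - bm * (Polynomial.Chebyshev.U ℝ (l - 1)).eval (Real.cos ξ)
    + am * (Polynomial.Chebyshev.U ℝ (l - 2)).eval (Real.cos ξ)

/-- The complex amplitude `c(ξ) = (1-p₋e^{-iξ})(1-q₋e^{-iξ})/(1-e^{-2iξ})`. -/
noncomputable def cAmp (pm qm : ℝ) (ξ : ℝ) : ℂ :=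
  (1 - (pm : ℂ) * Complex.exp (-Complex.I * ξ)) * (1 - (qm : ℂ) * Complex.exp (-Complex.I * ξ)) /
    (1 - Complex.exp (-2 * Complex.I * ξ))

/-- The multivariate amplitude `C(ξ)`. -/
noncomputable def CC (pm qm : ℝ) {n : ℕ} (ξ : Fin n → ℝ) : ℂ :=
  (∏ j, cAmp pm qm (ξ j)) *
    ∏ j, ∏ k ∈ Finset.Ioi j,
      ((1 - Complex.exp (-Complex.I * ((ξ j + ξ k : ℝ) : ℂ)))⁻¹ *
        (1 - Complex.exp (-Complex.I * ((ξ j - ξ k : ℝ) : ℂ)))⁻¹)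

/-- The Vandermonde-type determinant `V(ξ) = ∏_{j<k} 2(cos ξ_j - cos ξ_k)`. -/
noncomputable def VV {n : ℕ} (ξ : Fin n → ℝ) : ℝ :=
  ∏ j, ∏ k ∈ Finset.Ioi j, 2 * (Real.cos (ξ j) - Real.cos (ξ k))

/-- `H^{(m)}(ξ) = 2m + Σ_{q ∈ {p₋,q₋,p₊,q₊}} (1-q²)/(1-2q cos ξ + q²)`. -/
noncomputable def Hw (m : ℕ) (pm qm pp qp : ℝ) (ξ : ℝ) : ℝ :=
  2*(m:ℝ) + (1 - pm^2) / (1 - 2*pm*Real.cos ξ + pm^2)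
    + (1 - qm^2) / (1 - 2*qm*Real.cos ξ + qm^2)
    + (1 - pp^2) / (1 - 2*pp*Real.cos ξ + pp^2)
    + (1 - qp^2) / (1 - 2*qp*Real.cos ξ + qp^2)

/-- The cone `Λ^{(m,n)}` of partitions `m ≥ λ₁ ≥ ⋯ ≥ λ_n ≥ 0` (encoded with 0-based indices). -/
abbrev Lam (m n : ℕ) : Type :=
  {lam : Fin n → Fin (m+1) // ∀ j k : Fin n, j ≤ k → lam k ≤ lam j}

/-- The spectral vector `ξ_λ̂^{(m,n)} = (ξ_{λ̂_j + n - j})_{j=1}^n` (0-based: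
`j ↦ ξhat (λ̂_j + (n-1-j))`). -/
noncomputable def xiVec (m n : ℕ) (ξhat : ℕ → ℝ) (lamh : Lam m n) : Fin n → ℝ :=
  fun j => ξhat ((lamh.1 j : ℕ) + (n - 1 - (j : ℕ)))

/-- The generalized Schur polynomial
`P_λ(ξ) = det[p_{n-j+λ_j}(ξ_k)] / V(ξ)` (0-based row index). -/
noncomputable def Pgen (am bm : ℝ) (m n : ℕ) (lam : Lam m n) (ξ : Fin n → ℝ) : ℝ :=
  Matrix.det
    (Matrix.of fun j k : Fin n =>
      bs am bm ((n : ℤ) - 1 - (j : ℕ) + ((lam.1 j : ℕ) : ℤ)) (ξ k)) / VV ξ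

/-- The weights `Δ_λ^{(m,n)} = (1 - a₋δ_{λ_n,0})⁻¹ (1 - a₊δ_{λ_1,m})⁻¹`. -/
noncomputable def ΔLam (m n : ℕ) (hn : 1 ≤ n) (am ap : ℝ) (lam : Lam m n) : ℝ :=
  (1 - am * (if (lam.1 ⟨n-1, by omega⟩ : ℕ) = 0 then 1 else 0))⁻¹ *
    (1 - ap * (if (lam.1 ⟨0, by omega⟩ : ℕ) = m then 1 else 0))⁻¹

/-- `H^{(m,n)}(ξ) = ∏_j H^{(m+n-1)}(ξ_j)`. -/
noncomputable def Hmn (mtot : ℕ) (pm qm pp qp : ℝ) {n : ℕ} (ξ : Fin n → ℝ) : ℝ :=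
  ∏ j, Hw mtot pm qm pp qp (ξ j)

/-- The Plancherel weights `Δ̂_λ̂^{(m,n)} = 1/(C(ξ_λ̂)C(-ξ_λ̂)H^{(m,n)}(ξ_λ̂))`. -/
noncomputable def ΔhatLam (m n : ℕ) (pm qm pp qp : ℝ) (ξhat : ℕ → ℝ) (lamh : Lam m n) : ℂ :=
  (CC pm qm (xiVec m n ξhat lamh) *
    CC pm qm (fun j => -(xiVec m n ξhat lamh j)) *
      ((Hmn (m+n-1) pm qm pp qp (xiVec m n ξhat lamh) : ℝ) : ℂ))⁻¹

/-! ### The Cauchy–Binet formula -/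

/-- The Cauchy–Binet formula, with column sets enumerated in decreasing order. -/
lemma cauchy_binet {n N : ℕ} (A B : Matrix (Fin n) (Fin N) ℂ) :
    ∑ g : {g : Fin n → Fin N // StrictAnti g},
      (A.submatrix id g.1).det * (B.submatrix id g.1).det = (A * B.transpose).det := by
  classical
  have h1 : (A * B.transpose).det
      = ∑ f : Fin n → Fin N, (A.submatrix id f).det * ∏ i, B i (f i) := by
    rw [Matrix.det_apply']
    simp_rw [Matrix.mul_apply, Finset.prod_univ_sum, Fintype.piFinset_univ, Finset.mul_sum]
    rw [Finset.sum_comm]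
    refine Finset.sum_congr rfl fun f _ => ?_
    rw [Matrix.det_apply', Finset.sum_mul]
    refine Finset.sum_congr rfl fun σ _ => ?_
    simp [Finset.prod_mul_distrib, mul_assoc]
  have h2 : ∑ f : Fin n → Fin N, (A.submatrix id f).det * ∏ i, B i (f i)
      = ∑ f : Fin n → Fin N with Function.Injective f,
          (A.submatrix id f).det * ∏ i, B i (f i) := by
    refine (Finset.sum_subset (Finset.filter_subset _ _) fun f _ hf => ?_).symm
    have hf' : ¬ Function.Injective f := by simpa using hf
    simp only [Function.Injective, not_forall] at hf'
    obtain ⟨a, b, hab, hne⟩ := hf'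
    rw [Matrix.det_zero_of_column_eq hne (fun k => by simp [hab]), zero_mul]
  have h3 : ∑ p : {g : Fin n → Fin N // StrictAnti g} × Equiv.Perm (Fin n),
        (A.submatrix id (p.1.1 ∘ p.2)).det * ∏ i, B i (p.1.1 (p.2 i))
      = ∑ f : Fin n → Fin N with Function.Injective f,
          (A.submatrix id f).det * ∏ i, B i (f i) := by
    refine Finset.sum_nbij (fun p => p.1.1 ∘ p.2) ?_ ?_ ?_ ?_
    · rintro ⟨g, τ⟩ -
      simpa using g.2.injective
    · rintro ⟨⟨g, hg⟩, τ⟩ - ⟨⟨g', hg'⟩, τ'⟩ - h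
      simp only at h
      have ea : (g ∘ τ) ∘ (τ.symm : Equiv.Perm (Fin n)) = g := by ext; simp
      have eb : (g ∘ τ) ∘ (τ'.symm : Equiv.Perm (Fin n)) = g' := by rw [h]; ext; simp
      have : g = g' := by
        have := Tuple.unique_antitone (f := g ∘ τ) (σ := τ.symm) (τ := τ'.symm)
          (by rw [ea]; exact hg.antitone) (by rw [eb]; exact hg'.antitone)
        rwa [ea, eb] at this
      subst this
      have : τ = τ' := by
        ext i
        exact congrArg Fin.val (hg.injective (congrFun h i))
      subst this
      rfl
    · intro f hf
      have hf' : Function.Injective f := by simpa using hf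
      let σ := Tuple.sort (fun i => OrderDual.toDual (f i))
      have hm : Antitone (f ∘ σ) := Tuple.monotone_sort (fun i => OrderDual.toDual (f i))
      refine ⟨(⟨f ∘ σ, hm.strictAnti_of_injective (hf'.comp σ.injective)⟩, σ.symm), by simp, ?_⟩
      ext i; simp
    · intros; rfl
  rw [h1, h2, ← h3, Fintype.sum_prod_type]
  refine Finset.sum_congr rfl fun g _ => ?_
  have h4 : ∀ τ : Equiv.Perm (Fin n), (A.submatrix id (g.1 ∘ τ)).det
      = Equiv.Perm.sign τ * (A.submatrix id g.1).det := fun τ => by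
    rw [← Matrix.det_permute' τ (A.submatrix id g.1)]; rfl
  rw [← Matrix.det_transpose (B.submatrix id g.1),
    Matrix.det_apply' (B.submatrix id g.1).transpose, Finset.mul_sum]
  refine Finset.sum_congr rfl fun τ _ => ?_
  simp only [h4, Matrix.transpose_apply, Matrix.submatrix_apply, id]
  ring

/-- A strictly decreasing tuple is determined by its range. -/
lemma strictAnti_eq_of_mem_range {n N : ℕ} {f g : Fin n → Fin N} (hf : StrictAnti f)
    (hg : StrictAnti g) (h : ∀ j, ∃ k, f j = g k) : f = g := by
  choose s hs using h
  have hinj : Function.Injective s := fun a b hab => hf.injective (by rw [hs, hs, hab])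
  let σ : Equiv.Perm (Fin n) := Equiv.ofBijective s (Finite.injective_iff_bijective.mp hinj)
  have e : g ∘ σ = f := by ext j; simp [σ, hs]
  have := Tuple.unique_antitone (f := g) (σ := σ) (τ := Equiv.refl _)
    (by rw [e]; exact hf.antitone) (by simpa using hg.antitone)
  rw [e] at this
  simpa using this

/-- If the rows of `P` are orthogonal with respect to the weights `w`, with squared norms `N`,
then so are the maximal minors of `P` on decreasing row sets. -/
lemma sum_minors {n M : ℕ} (P : Matrix (Fin M) (Fin M) ℂ) (w N : Fin M → ℂ)
    (hP : ∀ l k, ∑ i, P l i * P k i * w i = if l = k then N l else 0)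
    (f g : Fin n → Fin M) (hf : StrictAnti f) (hg : StrictAnti g) :
    ∑ s : {s : Fin n → Fin M // StrictAnti s},
      (P.submatrix f s.1).det * (P.submatrix g s.1).det * ∏ k, w (s.1 k)
      = if g = f then ∏ j, N (f j) else 0 := by
  have h := cauchy_binet (Matrix.of fun j i => P (f j) i) (Matrix.of fun j i => w i * P (g j) i)
  have e : (Matrix.of fun j i => P (f j) i) * (Matrix.of fun j i => w i * P (g j) i).transpose
      = Matrix.of fun j k => if f j = g k then N (f j) else 0 := by
    ext j k
    rw [Matrix.mul_apply, Matrix.of_apply, ← hP]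
    refine Finset.sum_congr rfl fun i _ => ?_
    simp; ring
  rw [e] at h
  have h' : ∑ s : {s : Fin n → Fin M // StrictAnti s},
      (P.submatrix f s.1).det * (P.submatrix g s.1).det * ∏ k, w (s.1 k)
      = (Matrix.of fun j k => if f j = g k then N (f j) else 0).det := by
    rw [← h]
    refine Finset.sum_congr rfl fun s _ => ?_
    have : ((Matrix.of fun j i => w i * P (g j) i).submatrix id s.1)
        = Matrix.of fun j k => w (s.1 k) * (P.submatrix g s.1) j k := rfl
    rw [this, Matrix.det_mul_row]
    have : ((Matrix.of fun j i => P (f j) i).submatrix id s.1) = P.submatrix f s.1 := rfl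
    rw [this]; ring
  rw [h']
  split_ifs with hfg
  · subst hfg
    rw [← Matrix.det_diagonal]
    congr 1
    ext j k
    simp only [Matrix.of_apply, Matrix.diagonal_apply, hg.injective.eq_iff]
  · by_contra hne
    refine hfg (strictAnti_eq_of_mem_range hf hg fun j => ?_).symm
    by_contra hj
    push Not at hj
    exact hne (Matrix.det_eq_zero_of_row_eq_zero j fun k => by simp [hj k])

/-! ### The phase function -/

lemma den_pos {q : ℝ} (h1 : -1 < q) (h3 : q < 1) (x : ℝ) :
    0 < 1 - 2 * q * Real.cos x + q ^ 2 := by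
  nlinarith [Real.sin_sq_add_cos_sq x, sq_nonneg (q - Real.cos x), sq_nonneg (Real.sin x),
    sq_nonneg (1 - q * Real.cos x), mul_pos (by linarith : 0 < 1 + q) (by linarith : 0 < 1 - q),
    sq_nonneg (q * Real.sin x)]

lemma one_sub_mul_cos_pos {q : ℝ} (h1 : -1 < q) (h3 : q < 1) (x : ℝ) :
    0 < 1 - q * Real.cos x := by
  have := den_pos h1 h3 x
  nlinarith [mul_pos (by linarith : 0 < 1 + q) (by linarith : 0 < 1 - q)]

/-- Closed form of the phase `v q`, valid for all real arguments. -/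
lemma v_eq {q : ℝ} (h1 : -1 < q) (h3 : q < 1) (ξ : ℝ) :
    v q ξ = ξ + 2 * Real.arctan (q * Real.sin ξ / (1 - q * Real.cos ξ)) := by
  have hd : ∀ x : ℝ, HasDerivAt
      (fun x => x + 2 * Real.arctan (q * Real.sin x / (1 - q * Real.cos x)))
      ((1 - q^2) / (1 - 2*q*Real.cos x + q^2)) x := by
    intro x
    have hp := one_sub_mul_cos_pos h1 h3 x
    have hD := den_pos h1 h3 x
    have e1 : HasDerivAt (fun x => q * Real.sin x) (q * Real.cos x) x :=
      (Real.hasDerivAt_sin x).const_mul q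
    have e2 : HasDerivAt (fun x => 1 - q * Real.cos x) (-(q * -Real.sin x)) x :=
      ((Real.hasDerivAt_cos x).const_mul q).const_sub 1
    have e3 := ((e1.fun_div e2 hp.ne').arctan.const_mul 2)
    refine ((hasDerivAt_id' x).fun_add e3).congr_deriv ?_
    have hs := Real.sin_sq_add_cos_sq x
    have hD' : (1 - q * Real.cos x) ^ 2 + (q * Real.sin x) ^ 2 = 1 - 2*q*Real.cos x + q^2 := by
      linear_combination q ^ 2 * hs
    have hne : (1 - q * Real.cos x) ^ 2 + (q * Real.sin x) ^ 2 ≠ 0 := by rw [hD']; exact hD.ne'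
    have h5 : 1 + (q * Real.sin x / (1 - q * Real.cos x)) ^ 2
        = ((1 - q * Real.cos x) ^ 2 + (q * Real.sin x) ^ 2) / (1 - q * Real.cos x) ^ 2 := by
      field_simp
    rw [h5, ← hD']
    field_simp
    linear_combination (-q ^ 2) * hs
  have hc : Continuous fun x : ℝ => (1 - q^2) / (1 - 2*q*Real.cos x + q^2) :=
    Continuous.div (by fun_prop) (by fun_prop) fun x => (den_pos h1 h3 x).ne'
  unfold v
  rw [intervalIntegral.integral_eq_sub_of_hasDerivAt (fun x _ => hd x)
    (hc.intervalIntegrable _ _)]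
  simp

lemma v_strictMono {q : ℝ} (h1 : -1 < q) (h3 : q < 1) : StrictMono (v q) := by
  have hc : Continuous fun x : ℝ => (1 - q^2) / (1 - 2*q*Real.cos x + q^2) :=
    Continuous.div (by fun_prop) (by fun_prop) fun x => (den_pos h1 h3 x).ne'
  refine strictMono_of_deriv_pos fun x => ?_
  have : deriv (v q) x = (1 - q^2) / (1 - 2*q*Real.cos x + q^2) := hc.deriv_integral _ 0 x
  rw [this]
  exact div_pos (by nlinarith) (den_pos h1 h3 x)

lemma v_zero (q : ℝ) : v q 0 = 0 := by simp [v]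

lemma v_pi {q : ℝ} (h1 : -1 < q) (h3 : q < 1) : v q Real.pi = Real.pi := by
  rw [v_eq h1 h3]; simp

/-- `e^{i v_q(ξ)} = (z - q) / (1 - q z)` for `z = e^{iξ}`, in denominator-free form. -/
lemma exp_v {q : ℝ} (h1 : -1 < q) (h3 : q < 1) (ξ : ℝ) :
    Complex.exp (Complex.I * (v q ξ : ℝ)) * (1 - q * Complex.exp (Complex.I * ξ))
      = Complex.exp (Complex.I * ξ) - q := by
  have hp := one_sub_mul_cos_pos h1 h3 ξ
  rw [v_eq h1 h3]
  set t := Real.arctan (q * Real.sin ξ / (1 - q * Real.cos ξ)) with ht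
  have h : Real.sin t * (1 - q * Real.cos ξ) = Real.cos t * (q * Real.sin ξ) := by
    have h' := Real.tan_arctan (q * Real.sin ξ / (1 - q * Real.cos ξ))
    rw [← ht, Real.tan_eq_sin_div_cos,
      div_eq_div_iff (Real.cos_arctan_pos _).ne' hp.ne'] at h'
    linarith
  have hC : (Complex.sin t) * (1 - q * Complex.cos ξ) = Complex.cos t * (q * Complex.sin ξ) := by
    exact_mod_cast h
  have e : ∀ x : ℝ, Complex.exp (Complex.I * x) = Complex.cos x + Complex.sin x * Complex.I := by
    intro x; rw [mul_comm, Complex.exp_mul_I]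
  have e2 : Complex.exp (Complex.I * ((ξ + 2 * t : ℝ) : ℂ))
      = Complex.exp (Complex.I * ξ) * Complex.exp (Complex.I * t) ^ 2 := by
    rw [sq, ← Complex.exp_add, ← Complex.exp_add]; congr 1; push_cast; ring
  rw [e2, e, e]
  have hI := Complex.I_sq
  have s1 := Complex.sin_sq_add_cos_sq (ξ : ℂ)
  have s2 := Complex.sin_sq_add_cos_sq (t : ℂ)
  set c := Complex.cos (ξ : ℂ)
  set s := Complex.sin (ξ : ℂ)
  set a := Complex.cos (t : ℂ)
  set b := Complex.sin (t : ℂ)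
  have k1 : (a + b * Complex.I) * (a - b * Complex.I) = 1 := by
    linear_combination s2 - b ^ 2 * hI
  have k2 : (c + s * Complex.I) * (c - s * Complex.I) = 1 := by
    linear_combination s1 - s ^ 2 * hI
  have k3 : (a + b * Complex.I) * (1 - q * (c + s * Complex.I))
      = (a - b * Complex.I) * (1 - q * (c - s * Complex.I)) := by
    linear_combination (2 * Complex.I) * hC
  linear_combination (c + s * Complex.I) * (a + b * Complex.I) * k3
    + (c + s * Complex.I) * (1 - q * (c - s * Complex.I)) * k1 - q * k2

/-! ### Bernstein–Szegő polynomials -/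

lemma bs_rec (am bm : ℝ) (l : ℤ) (ξ : ℝ) :
    bs am bm (l + 1) ξ = 2 * Real.cos ξ * bs am bm l ξ - bs am bm (l - 1) ξ := by
  have h : ∀ k : ℤ, (Polynomial.Chebyshev.U ℝ (k + 1)).eval (Real.cos ξ)
      = 2 * Real.cos ξ * (Polynomial.Chebyshev.U ℝ k).eval (Real.cos ξ)
        - (Polynomial.Chebyshev.U ℝ (k - 1)).eval (Real.cos ξ) := fun k => by
    rw [Polynomial.Chebyshev.U_add_one]; simp
  have ha := h l
  have hb := h (l - 1)
  have hc := h (l - 2)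
  unfold bs
  rw [show l + 1 - 1 = l - 1 + 1 by ring, show l + 1 - 2 = l - 2 + 1 by ring,
    show l - 1 - 2 = l - 2 - 1 by ring, ha, hb, hc]
  ring

lemma bs_zero (am bm ξ : ℝ) : bs am bm 0 ξ = 1 - am := by
  simp [bs]; ring

lemma bs_one (am bm ξ : ℝ) : bs am bm 1 ξ = 2 * Real.cos ξ - bm := by
  simp [bs]

/-- The squared norm of `bs am bm l`; the weights at `l = 0` and `l = M` are exceptional. -/
noncomputable def nrm (am ap : ℝ) (M l : ℕ) : ℝ :=
  (1 - am * (if l = 0 then 1 else 0)) * (1 - ap * (if l = M then 1 else 0))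

/-- Splits off the two exceptional terms of a sum weighted by `1 / nrm`. -/
lemma sum_div_nrm (am ap : ℝ) (K : ℕ) (f : ℕ → ℝ) :
    ∑ l ∈ Finset.range (K + 2), f l / nrm am ap (K + 1) l
      = f 0 / (1 - am) + ∑ l ∈ Finset.range K, f (l + 1) + f (K + 1) / (1 - ap) := by
  rw [Finset.sum_range_succ, Finset.sum_range_succ']
  have h : ∀ l ∈ Finset.range K, f (l + 1) / nrm am ap (K + 1) (l + 1) = f (l + 1) := by
    intro l hl
    have : l ≠ K := (Finset.mem_range.mp hl).ne
    simp [nrm, this]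
  rw [Finset.sum_congr rfl h]
  simp [nrm]; ring

/-- Christoffel–Darboux: if `x` and `y` both satisfy the boundary condition at level `K + 1`,
the kernel of the orthogonal system vanishes unless `cos x = cos y`. -/
lemma kernel_offdiag {am bm ap bp : ℝ} (ham : 1 - am ≠ 0) (hap : 1 - ap ≠ 0) (K : ℕ) (x y : ℝ)
    (hx : bs am bm (K + 2) x - bp * bs am bm (K + 1) x + ap * bs am bm K x = 0)
    (hy : bs am bm (K + 2) y - bp * bs am bm (K + 1) y + ap * bs am bm K y = 0)
    (hxy : Real.cos x ≠ Real.cos y) :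
    ∑ l ∈ Finset.range (K + 2), bs am bm l x * bs am bm l y / nrm am ap (K + 1) l = 0 := by
  rw [sum_div_nrm am ap K fun l => bs am bm l x * bs am bm l y]
  have tele : ∀ K : ℕ, (2 * Real.cos x - 2 * Real.cos y) * ((1 - am) +
      ∑ l ∈ Finset.range K, bs am bm ((l + 1 : ℕ) : ℤ) x * bs am bm ((l + 1 : ℕ) : ℤ) y)
      = bs am bm (K + 1) x * bs am bm K y - bs am bm K x * bs am bm (K + 1) y := by
    intro K
    induction K with
    | zero => simp [bs_zero, bs_one]; ring
    | succ K ih =>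
      rw [Finset.sum_range_succ, ← add_assoc, mul_add, ih]
      have ex := bs_rec am bm (K + 1) x
      have ey := bs_rec am bm (K + 1) y
      simp only [add_sub_cancel_right] at ex ey
      push_cast
      rw [ex, ey]; ring
  have hne : 2 * Real.cos x - 2 * Real.cos y ≠ 0 := fun h => hxy (by linarith)
  have ex := bs_rec am bm (K + 1) x
  have ey := bs_rec am bm (K + 1) y
  simp only [add_sub_cancel_right, add_assoc] at ex ey
  norm_num at ex ey
  rw [ex] at hx
  rw [ey] at hy
  refine (mul_eq_zero.mp ?_).resolve_left hne
  have t := tele K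
  simp only [Nat.cast_zero, bs_zero]
  rw [show (1 - am) * (1 - am) / (1 - am) = 1 - am by field_simp, mul_add, t]
  push_cast
  field_simp
  linear_combination bs am bm (K + 1) y * hx - bs am bm (K + 1) x * hy

/-- The rational function of `z = e^{iξ}` representing `cAmp`. -/
noncomputable def cz (p q z : ℂ) : ℂ := (z - p) * (z - q) / (z ^ 2 - 1)

/-- `cz p q z⁻¹`, cleared of negative powers. -/
noncomputable def czi (p q z : ℂ) : ℂ := (1 - p * z) * (1 - q * z) / (1 - z ^ 2)

lemma exp_sq_ne_one {ξ : ℝ} (h : Real.sin ξ ≠ 0) : Complex.exp (Complex.I * ξ) ^ 2 - 1 ≠ 0 := by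
  intro h0
  apply h
  have hz := Complex.exp_ne_zero (Complex.I * ξ)
  have e : Complex.sin ξ = 0 := by
    rw [Complex.sin, show -(ξ : ℂ) * Complex.I = -(Complex.I * ξ) by ring,
      show (ξ : ℂ) * Complex.I = Complex.I * ξ by ring, Complex.exp_neg]
    field_simp
    linear_combination (-Complex.I) * h0
  exact_mod_cast e

lemma cAmp_eq {p q ξ : ℝ} (h : Real.sin ξ ≠ 0) :
    cAmp p q ξ = cz p q (Complex.exp (Complex.I * ξ)) := by
  have hz := Complex.exp_ne_zero (Complex.I * ξ)
  have h1 := exp_sq_ne_one h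
  have e1 : Complex.exp (-Complex.I * ξ) = (Complex.exp (Complex.I * ξ))⁻¹ := by
    rw [← Complex.exp_neg]; congr 1; ring
  have e2 : Complex.exp (-2 * Complex.I * ξ) = (Complex.exp (Complex.I * ξ) ^ 2)⁻¹ := by
    rw [← Complex.exp_nat_mul, ← Complex.exp_neg]; congr 1; push_cast; ring
  rw [cAmp, cz, e1, e2]
  set z := Complex.exp (Complex.I * ξ)
  have : 1 - (z ^ 2)⁻¹ ≠ 0 := by
    rw [show 1 - (z ^ 2)⁻¹ = (z ^ 2 - 1) / z ^ 2 by field_simp]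
    exact div_ne_zero h1 (pow_ne_zero _ hz)
  rw [div_eq_div_iff this h1]
  field_simp

lemma cAmp_neg_eq {p q ξ : ℝ} :
    cAmp p q (-ξ) = czi p q (Complex.exp (Complex.I * ξ)) := by
  have e1 : Complex.exp (-Complex.I * ((-ξ : ℝ) : ℂ)) = Complex.exp (Complex.I * ξ) := by
    congr 1; push_cast; ring
  have e2 : Complex.exp (-2 * Complex.I * ((-ξ : ℝ) : ℂ)) = Complex.exp (Complex.I * ξ) ^ 2 := by
    rw [← Complex.exp_nat_mul]; congr 1; push_cast; ring
  rw [cAmp, czi, e1, e2]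

/-- The plane-wave decomposition of the Bernstein–Szegő polynomials. -/
lemma bs_exp {p q ξ : ℝ} (h : Real.sin ξ ≠ 0) (l : ℤ) :
    ((bs (p * q) (p + q) l ξ : ℝ) : ℂ)
      = cz p q (Complex.exp (Complex.I * ξ)) * Complex.exp (Complex.I * ξ) ^ l
        + czi p q (Complex.exp (Complex.I * ξ)) * (Complex.exp (Complex.I * ξ) ^ l)⁻¹ := by
  have hz := Complex.exp_ne_zero (Complex.I * ξ)
  have h1 := exp_sq_ne_one h
  have h2 : 1 - Complex.exp (Complex.I * ξ) ^ 2 ≠ 0 := fun h => h1 (by linear_combination -h)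
  have hU : ∀ k : ℤ, (((Polynomial.Chebyshev.U ℝ k).eval (Real.cos ξ) : ℝ) : ℂ)
      = (Complex.exp (Complex.I * ξ) * Complex.exp (Complex.I * ξ) ^ k * Complex.exp (Complex.I * ξ)
        - (Complex.exp (Complex.I * ξ) ^ k)⁻¹) / (Complex.exp (Complex.I * ξ) ^ 2 - 1) := by
    intro k
    have hs : Complex.sin ξ ≠ 0 := by exact_mod_cast h
    have e := Polynomial.Chebyshev.U_complex_cos (ξ : ℂ) k
    rw [Polynomial.Chebyshev.complex_ofReal_eval_U, Complex.ofReal_cos, eq_div_iff h1]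
    apply mul_right_cancel₀ hs
    rw [mul_right_comm, e, Complex.sin, Complex.sin,
      show -((k + 1 : ℂ) * ξ) * Complex.I = -((k : ℂ) * (Complex.I * ξ) + Complex.I * ξ) by ring,
      show ((k + 1 : ℂ) * ξ) * Complex.I = (k : ℂ) * (Complex.I * ξ) + Complex.I * ξ by ring,
      show -(ξ : ℂ) * Complex.I = -(Complex.I * ξ) by ring,
      show (ξ : ℂ) * Complex.I = Complex.I * ξ by ring,
      Complex.exp_neg, Complex.exp_neg, Complex.exp_add, Complex.exp_int_mul]
    have hk := zpow_ne_zero k hz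
    set z := Complex.exp (Complex.I * ξ)
    field_simp
    ring
  unfold bs
  push_cast [hU]
  rw [zpow_sub₀ hz, zpow_sub₀ hz, cz, czi]
  have hk := zpow_ne_zero l hz
  norm_cast
  set z := Complex.exp (Complex.I * ξ)
  push_cast
  field_simp
  ring

/-! ### The norm computation and the Bethe equation -/

/-- The summand of `Hw` as a rational function of `z = e^{iξ}`. -/
noncomputable def hz (q z : ℂ) : ℂ := (1 - q ^ 2) * z / ((1 - q * z) * (z - q))

/-- The sum of squared plane-wave combinations: a cross term linear in `K` plus two geometric
series. -/
lemma sum_sq_waves (c d z : ℂ) (hz : z ≠ 0) (h1 : z ^ 2 - 1 ≠ 0) (K : ℕ) :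
    ∑ l ∈ Finset.range K, (c * z ^ (l + 1) + d * (z ^ (l + 1))⁻¹) ^ 2
      = 2 * K * (c * d) + (c ^ 2 * z ^ (2 * (K + 1)) - c ^ 2 * z ^ 2) / (z ^ 2 - 1)
        - (d ^ 2 / z ^ (2 * (K + 1)) * z ^ 2 - d ^ 2) / (z ^ 2 - 1) := by
  induction K with
  | zero => field_simp; simp
  | succ K ih =>
    rw [Finset.sum_range_succ, ih]
    have hk := pow_ne_zero K hz
    push_cast
    field_simp
    ring

/-- The lower ends of the two geometric series, together with the exceptional term at `l = 0`,
yield the part of the density depending on `p` and `q`. -/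
lemma diag_minus (p q z : ℂ) (h1 : z ^ 2 - 1 ≠ 0)
    (hp : z - p ≠ 0) (hq : z - q ≠ 0) (hp' : 1 - p * z ≠ 0) (hq' : 1 - q * z ≠ 0) :
    -(cz p q z ^ 2 * z ^ 2) / (z ^ 2 - 1) + czi p q z ^ 2 / (z ^ 2 - 1) + (1 - p * q)
      = cz p q z * czi p q z * (1 + hz p z + hz q z) := by
  have h2 : 1 - z ^ 2 ≠ 0 := fun h => h1 (by linear_combination -h)
  have e : czi p q z = -((1 - p * z) * (1 - q * z)) / (z ^ 2 - 1) := by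
    rw [czi, div_eq_div_iff h2 h1]; ring
  have hp'' : 1 - z * p ≠ 0 := by rwa [mul_comm]
  have hq'' : 1 - z * q ≠ 0 := by rwa [mul_comm]
  rw [e, cz, hz, hz, mul_comm p z, mul_comm q z]
  field_simp
  ring

/-- The upper ends of the two geometric series, rewritten by the Bethe equation and divided by
`c c̄`, together with the exceptional term at `l = M`, yield the part of the density depending on
`r` and `s`. -/
lemma diag_plus (r s z : ℂ) (h1 : z ^ 2 - 1 ≠ 0) (hrs : 1 - r * s ≠ 0)
    (hp : z - r ≠ 0) (hq : z - s ≠ 0) (hp' : 1 - r * z ≠ 0) (hq' : 1 - s * z ≠ 0) :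
    -((1 - r * z) * (1 - s * z) / ((z - r) * (z - s))
        - (z - r) * (z - s) / ((1 - r * z) * (1 - s * z)) * z ^ 2) / (z ^ 2 - 1)
      + (2 - (1 - r * z) * (1 - s * z) / ((z - r) * (z - s))
        - (z - r) * (z - s) / ((1 - r * z) * (1 - s * z))) / (1 - r * s)
      = 1 + hz r z + hz s z := by
  have hp'' : 1 - z * r ≠ 0 := by rwa [mul_comm]
  have hq'' : 1 - z * s ≠ 0 := by rwa [mul_comm]
  rw [hz, hz, mul_comm r z, mul_comm s z]
  field_simp
  ring

/-- The norm computation: for a solution `z` of the Bethe equation, the two geometric series in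
`∑ (c zˡ + c̄ z⁻ˡ)²` and the exceptional boundary terms combine to `c c̄` times the density. -/
lemma diag_sum (p q r s z : ℂ) (hz0 : z ≠ 0) (h1 : z ^ 2 - 1 ≠ 0) (hrs : 1 - r * s ≠ 0)
    (hp : z - p ≠ 0) (hq : z - q ≠ 0) (hp' : 1 - p * z ≠ 0) (hq' : 1 - q * z ≠ 0)
    (hr : z - r ≠ 0) (hs : z - s ≠ 0) (hr' : 1 - r * z ≠ 0) (hs' : 1 - s * z ≠ 0) (K : ℕ)
    (hB : z ^ (2 * (K + 1)) * ((z - p) * (z - q) * ((z - r) * (z - s)))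
      = (1 - p * z) * (1 - q * z) * ((1 - r * z) * (1 - s * z))) :
    (1 - p * q) + ∑ l ∈ Finset.range K,
        (cz p q z * z ^ (l + 1) + czi p q z * (z ^ (l + 1))⁻¹) ^ 2
      + (cz p q z * z ^ (K + 1) + czi p q z * (z ^ (K + 1))⁻¹) ^ 2 / (1 - r * s)
      = cz p q z * czi p q z * (2 * (K + 1) + hz p z + hz q z + hz r z + hz s z) := by
  have h2 : 1 - z ^ 2 ≠ 0 := fun h => h1 (by linear_combination -h)
  have e : czi p q z = -((1 - p * z) * (1 - q * z)) / (z ^ 2 - 1) := by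
    rw [czi, div_eq_div_iff h2 h1]; ring
  have hZ : z ^ (2 * (K + 1)) = (1 - p * z) * (1 - q * z) * ((1 - r * z) * (1 - s * z))
      / ((z - p) * (z - q) * ((z - r) * (z - s))) := by
    rw [eq_div_iff (by simp [*]), hB]
  have k1 : cz p q z ^ 2 * z ^ (2 * (K + 1)) = -(cz p q z * czi p q z) *
      ((1 - r * z) * (1 - s * z) / ((z - r) * (z - s))) := by
    rw [hZ, e, cz]; field_simp
  have k2 : czi p q z ^ 2 / z ^ (2 * (K + 1)) = -(cz p q z * czi p q z) *
      ((z - r) * (z - s) / ((1 - r * z) * (1 - s * z))) := by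
    rw [hZ, e, cz]; field_simp
  have k3 : (cz p q z * z ^ (K + 1) + czi p q z * (z ^ (K + 1))⁻¹) ^ 2
      = cz p q z ^ 2 * z ^ (2 * (K + 1)) + czi p q z ^ 2 / z ^ (2 * (K + 1))
        + 2 * (cz p q z * czi p q z) := by
    field_simp; ring
  rw [sum_sq_waves _ _ _ hz0 h1, k3, k1, k2]
  have m1 := diag_minus p q z h1 hp hq hp' hq'
  have m2 := diag_plus r s z h1 hrs hr hs hr' hs'
  generalize cz p q z = c at *
  generalize czi p q z = d at *
  generalize (1 - r * z) * (1 - s * z) / ((z - r) * (z - s)) = R at *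
  generalize (z - r) * (z - s) / ((1 - r * z) * (1 - s * z)) = S at *
  linear_combination m1 + c * d * m2

lemma Hw_term_eq {q ξ : ℝ} (h1 : -1 < q) (h3 : q < 1) :
    (((1 - q ^ 2) / (1 - 2 * q * Real.cos ξ + q ^ 2) : ℝ) : ℂ)
      = hz q (Complex.exp (Complex.I * ξ)) := by
  have hz0 := Complex.exp_ne_zero (Complex.I * ξ)
  have hD : ((1 - 2 * q * Real.cos ξ + q ^ 2 : ℝ) : ℂ) ≠ 0 := by
    exact_mod_cast (den_pos h1 h3 ξ).ne'
  have e : (1 - q * Complex.exp (Complex.I * ξ)) * (Complex.exp (Complex.I * ξ) - q)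
      = Complex.exp (Complex.I * ξ) * ((1 - 2 * q * Real.cos ξ + q ^ 2 : ℝ) : ℂ) := by
    push_cast
    rw [Complex.cos, show -(ξ : ℂ) * Complex.I = -(Complex.I * ξ) by ring,
      show (ξ : ℂ) * Complex.I = Complex.I * ξ by ring, Complex.exp_neg]
    field_simp
    ring
  rw [hz, e, Complex.ofReal_div]
  push_cast at hD ⊢
  field_simp

lemma one_sub_mul_exp_ne {q : ℝ} (h1 : -1 < q) (h3 : q < 1) (ξ : ℝ) :
    1 - q * Complex.exp (Complex.I * ξ) ≠ 0 := by
  intro h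
  have h' := congrArg Complex.re h
  rw [mul_comm Complex.I, Complex.exp_mul_I] at h'
  simp [← Complex.ofReal_cos, ← Complex.ofReal_sin] at h'
  linarith [one_sub_mul_cos_pos h1 h3 ξ]

lemma exp_sub_ne {q : ℝ} (h1 : -1 < q) (h3 : q < 1) (ξ : ℝ) :
    Complex.exp (Complex.I * ξ) - q ≠ 0 := by
  rw [← exp_v h1 h3]
  exact mul_ne_zero (Complex.exp_ne_zero _) (one_sub_mul_exp_ne h1 h3 ξ)

/-- Exponentiated form of the quantization condition: the Bethe equation. -/
lemma bethe {p q r s : ℝ} (hp : -1 < p) (hp' : p < 1) (hq : -1 < q) (hq' : q < 1)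
    (hr : -1 < r) (hr' : r < 1) (hs : -1 < s) (hs' : s < 1) (M i : ℕ) (ξ : ℝ)
    (h : 2 * (M : ℝ) * ξ + v p ξ + v q ξ + v r ξ + v s ξ = 2 * Real.pi * ((i : ℝ) + 1)) :
    let z := Complex.exp (Complex.I * ξ)
    z ^ (2 * M) * ((z - p) * (z - q) * ((z - r) * (z - s)))
      = (1 - p * z) * (1 - q * z) * ((1 - r * z) * (1 - s * z)) := by
  intro z
  have e : z ^ (2 * M) * (Complex.exp (Complex.I * (v p ξ : ℝ)) *
      Complex.exp (Complex.I * (v q ξ : ℝ)) * (Complex.exp (Complex.I * (v r ξ : ℝ)) *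
      Complex.exp (Complex.I * (v s ξ : ℝ)))) = 1 := by
    rw [← Complex.exp_nat_mul, ← Complex.exp_add, ← Complex.exp_add, ← Complex.exp_add,
      ← Complex.exp_add, Complex.exp_eq_one_iff]
    refine ⟨i + 1, ?_⟩
    have hC : 2 * (M : ℂ) * ξ + v p ξ + v q ξ + v r ξ + v s ξ = 2 * Real.pi * ((i : ℂ) + 1) := by
      exact_mod_cast h
    push_cast
    linear_combination Complex.I * hC
  simp only [z] at e ⊢
  rw [← exp_v hp hp', ← exp_v hq hq', ← exp_v hr hr', ← exp_v hs hs']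
  linear_combination (1 - p * Complex.exp (Complex.I * ξ)) * (1 - q * Complex.exp (Complex.I * ξ))
    * ((1 - r * Complex.exp (Complex.I * ξ)) * (1 - s * Complex.exp (Complex.I * ξ))) * e

/-- The Bethe equation forces the boundary condition
`p_{M+1} - b₊ p_M + a₊ p_{M-1} = 0` at `M = K + 1`. -/
lemma boundary {p q r s ξ : ℝ} (h : Real.sin ξ ≠ 0) (K : ℕ)
    (hB : let z := Complex.exp (Complex.I * ξ)
      z ^ (2 * (K + 1)) * ((z - p) * (z - q) * ((z - r) * (z - s)))
      = (1 - p * z) * (1 - q * z) * ((1 - r * z) * (1 - s * z))) :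
    bs (p * q) (p + q) (K + 2) ξ - (r + s) * bs (p * q) (p + q) (K + 1) ξ
      + (r * s) * bs (p * q) (p + q) K ξ = 0 := by
  have hz := Complex.exp_ne_zero (Complex.I * ξ)
  have h1 := exp_sq_ne_one h
  have key : ((bs (p * q) (p + q) (K + 2) ξ : ℝ) : ℂ)
      - (r + s) * ((bs (p * q) (p + q) (K + 1) ξ : ℝ) : ℂ)
      + (r * s) * ((bs (p * q) (p + q) K ξ : ℝ) : ℂ) = 0 := by
    rw [bs_exp h, bs_exp h, bs_exp h]
    simp only at hB
    set z := Complex.exp (Complex.I * ξ)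
    have h2 : 1 - z ^ 2 ≠ 0 := fun h => h1 (by linear_combination -h)
    have e : czi p q z = -((1 - p * z) * (1 - q * z)) / (z ^ 2 - 1) := by
      rw [czi, div_eq_div_iff h2 h1]; ring
    rw [e, cz]
    have hk := pow_ne_zero K hz
    have z2 : z ^ ((K : ℤ) + 2) = z ^ K * z ^ 2 := by rw [← pow_add]; norm_cast
    have z1 : z ^ ((K : ℤ) + 1) = z ^ K * z := by rw [← pow_succ]; norm_cast
    have hB' : (z ^ K) ^ 2 * z ^ 2 * ((z - p) * (z - q) * ((z - r) * (z - s)))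
        = (1 - p * z) * (1 - q * z) * ((1 - r * z) * (1 - s * z)) := by
      rw [← hB]; ring
    rw [z2, z1, zpow_natCast]
    field_simp
    linear_combination hB'
  exact_mod_cast key

/-! ### One-variable dual orthogonality -/

/-- Since `v q 0 = 0` and `v q π = π`, monotonicity of the phases confines the nodes with
`0 ≤ i ≤ M` to `(0, π)`. -/
lemma node_mem {p q r s : ℝ} (hp : -1 < p) (hp' : p < 1) (hq : -1 < q) (hq' : q < 1)
    (hr : -1 < r) (hr' : r < 1) (hs : -1 < s) (hs' : s < 1) (M i : ℕ) (hi : i ≤ M) (ξ : ℝ)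
    (h : 2 * (M : ℝ) * ξ + v p ξ + v q ξ + v r ξ + v s ξ = 2 * Real.pi * ((i : ℝ) + 1)) :
    0 < ξ ∧ ξ < Real.pi := by
  have hM : (0 : ℝ) ≤ M := Nat.cast_nonneg _
  have hiM : (i : ℝ) ≤ M := by exact_mod_cast hi
  have hi0 : (0 : ℝ) ≤ i := Nat.cast_nonneg _
  have hpi := Real.pi_pos
  constructor
  · by_contra! hle
    have e1 := (v_strictMono hp hp').monotone hle
    have e2 := (v_strictMono hq hq').monotone hle
    have e3 := (v_strictMono hr hr').monotone hle
    have e4 := (v_strictMono hs hs').monotone hle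
    rw [v_zero] at e1 e2 e3 e4
    nlinarith [mul_nonneg hM (neg_nonneg.mpr hle)]
  · by_contra! hle
    have e1 := (v_strictMono hp hp').monotone hle
    have e2 := (v_strictMono hq hq').monotone hle
    have e3 := (v_strictMono hr hr').monotone hle
    have e4 := (v_strictMono hs hs').monotone hle
    rw [v_pi (by assumption) (by assumption)] at e1 e2 e3 e4
    nlinarith [mul_le_mul_of_nonneg_left hle hM, mul_le_mul_of_nonneg_right hiM hpi.le]

lemma one_sub_mul_pos {p q : ℝ} (hp : -1 < p) (hp' : p < 1) (hq : -1 < q) (hq' : q < 1) :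
    0 < 1 - p * q := by
  nlinarith [mul_pos (by linarith : 0 < 1 + p) (by linarith : 0 < 1 - q),
    mul_pos (by linarith : 0 < 1 - p) (by linarith : 0 < 1 + q)]

lemma Hw_pos {p q r s : ℝ} (hp : -1 < p) (hp' : p < 1) (hq : -1 < q) (hq' : q < 1)
    (hr : -1 < r) (hr' : r < 1) (hs : -1 < s) (hs' : s < 1) (M : ℕ) (ξ : ℝ) :
    0 < Hw M p q r s ξ := by
  have t : ∀ q : ℝ, -1 < q → q < 1 → 0 < (1 - q ^ 2) / (1 - 2 * q * Real.cos ξ + q ^ 2) :=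
    fun q h1 h3 => div_pos (by nlinarith) (den_pos h1 h3 ξ)
  have hM : (0 : ℝ) ≤ M := Nat.cast_nonneg _
  unfold Hw
  linarith [t p hp hp', t q hq hq', t r hr hr', t s hs hs']

lemma amp_ne_zero {p q ξ : ℝ} (hp : -1 < p) (hp' : p < 1) (hq : -1 < q) (hq' : q < 1)
    (h : Real.sin ξ ≠ 0) : cAmp p q ξ * cAmp p q (-ξ) ≠ 0 := by
  have h1 := exp_sq_ne_one h
  have h2 : 1 - Complex.exp (Complex.I * ξ) ^ 2 ≠ 0 := fun h => h1 (by linear_combination -h)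
  rw [cAmp_eq h, cAmp_neg_eq, cz, czi]
  exact mul_ne_zero
    (div_ne_zero (mul_ne_zero (exp_sub_ne hp hp' ξ) (exp_sub_ne hq hq' ξ)) h1)
    (div_ne_zero (mul_ne_zero (one_sub_mul_exp_ne hp hp' ξ) (one_sub_mul_exp_ne hq hq' ξ)) h2)

/-- Orthogonality in the spectral variable at a single node: the sum over degrees of the squared
polynomials is the inverse Plancherel weight. -/
lemma kernel_diag {p q r s : ℝ} (hp : -1 < p) (hp' : p < 1) (hq : -1 < q) (hq' : q < 1)
    (hr : -1 < r) (hr' : r < 1) (hs : -1 < s) (hs' : s < 1) (K : ℕ) (ξ : ℝ)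
    (h : Real.sin ξ ≠ 0)
    (hB : let z := Complex.exp (Complex.I * ξ)
      z ^ (2 * (K + 1)) * ((z - p) * (z - q) * ((z - r) * (z - s)))
      = (1 - p * z) * (1 - q * z) * ((1 - r * z) * (1 - s * z))) :
    ((∑ l ∈ Finset.range (K + 2), bs (p * q) (p + q) l ξ * bs (p * q) (p + q) l ξ
        / nrm (p * q) (r * s) (K + 1) l : ℝ) : ℂ)
      = cAmp p q ξ * cAmp p q (-ξ) * (Hw (K + 1) p q r s ξ : ℝ) := by
  have ham := (one_sub_mul_pos hp hp' hq hq').ne'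
  have hap : (1 - r * s : ℂ) ≠ 0 := by exact_mod_cast (one_sub_mul_pos hr hr' hs hs').ne'
  rw [sum_div_nrm _ _ K fun l => bs (p * q) (p + q) l ξ * bs (p * q) (p + q) l ξ]
  have D := diag_sum p q r s (Complex.exp (Complex.I * ξ)) (Complex.exp_ne_zero _)
    (exp_sq_ne_one h) hap (exp_sub_ne hp hp' ξ) (exp_sub_ne hq hq' ξ)
    (one_sub_mul_exp_ne hp hp' ξ) (one_sub_mul_exp_ne hq hq' ξ) (exp_sub_ne hr hr' ξ)
    (exp_sub_ne hs hs' ξ) (one_sub_mul_exp_ne hr hr' ξ) (one_sub_mul_exp_ne hs hs' ξ) K hB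
  have hbs : ∀ l : ℕ, ((bs (p * q) (p + q) ((l : ℕ) : ℤ) ξ : ℝ) : ℂ)
      = cz p q (Complex.exp (Complex.I * ξ)) * Complex.exp (Complex.I * ξ) ^ l
        + czi p q (Complex.exp (Complex.I * ξ)) * (Complex.exp (Complex.I * ξ) ^ l)⁻¹ := fun l => by
    rw [bs_exp h, zpow_natCast]
  have hH : ((Hw (K + 1) p q r s ξ : ℝ) : ℂ) = 2 * (K + 1) + hz p (Complex.exp (Complex.I * ξ))
      + hz q (Complex.exp (Complex.I * ξ)) + hz r (Complex.exp (Complex.I * ξ))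
      + hz s (Complex.exp (Complex.I * ξ)) := by
    rw [← Hw_term_eq hp hp', ← Hw_term_eq hq hq', ← Hw_term_eq hr hr', ← Hw_term_eq hs hs', Hw]
    push_cast
    ring
  rw [hH, cAmp_eq h, cAmp_neg_eq, ← D, Nat.cast_zero, bs_zero,
    show (1 - p * q) * (1 - p * q) / (1 - p * q) = 1 - p * q by field_simp,
    Complex.ofReal_add, Complex.ofReal_add, Complex.ofReal_sum, Complex.ofReal_div]
  simp only [Complex.ofReal_mul, hbs]
  push_cast
  ring_nf

/-- One-variable dual orthogonality. -/
lemma dual_orth {p q r s : ℝ} (hp : -1 < p) (hp' : p < 1) (hq : -1 < q) (hq' : q < 1)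
    (hr : -1 < r) (hr' : r < 1) (hs : -1 < s) (hs' : s < 1) (M : ℕ) (hM : 1 ≤ M) (ξ : ℕ → ℝ)
    (h : ∀ i ≤ M, 2 * (M : ℝ) * ξ i + v p (ξ i) + v q (ξ i) + v r (ξ i) + v s (ξ i)
      = 2 * Real.pi * ((i : ℝ) + 1))
    (hcos : ∀ i j : ℕ, i ≤ M → j ≤ M → i ≠ j → Real.cos (ξ i) ≠ Real.cos (ξ j))
    (l k : Fin (M + 1)) :
    ∑ i : Fin (M + 1), ((bs (p * q) (p + q) (l : ℕ) (ξ i) : ℝ) : ℂ)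
        * ((bs (p * q) (p + q) (k : ℕ) (ξ i) : ℝ) : ℂ)
        * (cAmp p q (ξ i) * cAmp p q (-ξ i) * (Hw M p q r s (ξ i) : ℝ))⁻¹
      = if l = k then ((nrm (p * q) (r * s) M l : ℝ) : ℂ) else 0 := by
  obtain ⟨K, rfl⟩ : ∃ K, M = K + 1 := ⟨M - 1, by omega⟩
  have ham := (one_sub_mul_pos hp hp' hq hq').ne'
  have hap := (one_sub_mul_pos hr hr' hs hs').ne'
  have hsin : ∀ i ≤ K + 1, Real.sin (ξ i) ≠ 0 := fun i hi => by
    obtain ⟨a, b⟩ := node_mem hp hp' hq hq' hr hr' hs hs' (K + 1) i hi (ξ i) (h i hi)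
    exact (Real.sin_pos_of_pos_of_lt_pi a b).ne'
  have hB := fun i (hi : i ≤ K + 1) =>
    bethe hp hp' hq hq' hr hr' hs hs' (K + 1) i (ξ i) (h i hi)
  have hN : ∀ l : ℕ, nrm (p * q) (r * s) (K + 1) l ≠ 0 := fun l => by
    unfold nrm
    split_ifs <;> simp [ham, hap]
  set W : ℕ → ℂ := fun i =>
    cAmp p q (ξ i) * cAmp p q (-ξ i) * (Hw (K + 1) p q r s (ξ i) : ℝ) with hW
  have hW0 : ∀ i ≤ K + 1, W i ≠ 0 := fun i hi =>
    mul_ne_zero (amp_ne_zero hp hp' hq hq' (hsin i hi)) (by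
      exact_mod_cast (Hw_pos hp hp' hq hq' hr hr' hs hs' (K + 1) (ξ i)).ne')
  have hker : ∀ i j : Fin (K + 1 + 1),
      ∑ l : Fin (K + 1 + 1), ((bs (p * q) (p + q) (l : ℕ) (ξ i) : ℝ) : ℂ)
        * ((bs (p * q) (p + q) (l : ℕ) (ξ j) : ℝ) : ℂ)
        * ((nrm (p * q) (r * s) (K + 1) l : ℝ) : ℂ)⁻¹ = if i = j then W i else 0 := by
    intro i j
    have hi : (i : ℕ) ≤ K + 1 := by omega
    have hj : (j : ℕ) ≤ K + 1 := by omega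
    rw [Fin.sum_univ_eq_sum_range fun l : ℕ => ((bs (p * q) (p + q) (l : ℕ) (ξ i) : ℝ) : ℂ)
        * ((bs (p * q) (p + q) (l : ℕ) (ξ j) : ℝ) : ℂ)
        * ((nrm (p * q) (r * s) (K + 1) l : ℝ) : ℂ)⁻¹]
    split_ifs with hij
    · subst hij
      have := kernel_diag hp hp' hq hq' hr hr' hs hs' K (ξ i) (hsin i hi) (hB i hi)
      simp only [hW, ← this]
      push_cast
      simp only [div_eq_mul_inv]
    · have := kernel_offdiag ham hap K (ξ i) (ξ j) (boundary (hsin i hi) K (hB i hi))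
        (boundary (hsin j hj) K (hB j hj)) (hcos i j hi hj fun e => hij (Fin.ext e))
      rw [← Complex.ofReal_zero, ← this]
      push_cast
      simp only [div_eq_mul_inv]
  -- The kernel identity says that `A` has left inverse `Aᵀ / nrm` after weighting the columns;
  -- a one-sided inverse of a square matrix is two-sided.
  let A : Matrix (Fin (K + 1 + 1)) (Fin (K + 1 + 1)) ℂ :=
    Matrix.of fun l i => ((bs (p * q) (p + q) (l : ℕ) (ξ i) : ℝ) : ℂ) * (W i)⁻¹
  let B : Matrix (Fin (K + 1 + 1)) (Fin (K + 1 + 1)) ℂ :=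
    Matrix.of fun i l => ((bs (p * q) (p + q) (l : ℕ) (ξ i) : ℝ) : ℂ)
      * ((nrm (p * q) (r * s) (K + 1) l : ℝ) : ℂ)⁻¹
  have hBA : B * A = 1 := by
    ext i j
    rw [Matrix.mul_apply, Matrix.one_apply]
    have := hker i j
    calc ∑ l, B i l * A l j = (∑ l : Fin (K + 1 + 1), ((bs (p * q) (p + q) (l : ℕ) (ξ i) : ℝ) : ℂ)
        * ((bs (p * q) (p + q) (l : ℕ) (ξ j) : ℝ) : ℂ)
        * ((nrm (p * q) (r * s) (K + 1) l : ℝ) : ℂ)⁻¹) * (W j)⁻¹ := by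
          rw [Finset.sum_mul]
          refine Finset.sum_congr rfl fun l _ => ?_
          simp only [A, B, Matrix.of_apply]; ring
      _ = _ := by
          rw [this]
          split_ifs with hij
          · subst hij; exact mul_inv_cancel₀ (hW0 i (by omega))
          · simp
  have hAB' : A * B = 1 := mul_eq_one_comm.mp hBA
  have hAB := congrFun (congrFun hAB' l) k
  rw [Matrix.mul_apply, Matrix.one_apply] at hAB
  have hNk : ((nrm (p * q) (r * s) (K + 1) k : ℝ) : ℂ) ≠ 0 := by exact_mod_cast hN k
  calc _ = (∑ i, A l i * B i k) * ((nrm (p * q) (r * s) (K + 1) k : ℝ) : ℂ) := by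
          rw [Finset.sum_mul]
          refine Finset.sum_congr rfl fun i _ => ?_
          simp only [A, B, Matrix.of_apply, hW]
          field_simp
    _ = _ := by
          rw [hAB]
          split_ifs with hlk
          · rw [hlk, one_mul]
          · simp

/-! ### Several variables -/

/-- The pairwise factors of `C(ξ) C(-ξ)` are the inverse squares of those of the Vandermonde
product. -/
lemma CC_mul_CC_neg {p q : ℝ} {n : ℕ} (ξ : Fin n → ℝ) :
    CC p q ξ * CC p q (fun j => -ξ j)
      = (∏ j, cAmp p q (ξ j) * cAmp p q (-ξ j)) * (((VV ξ : ℝ) : ℂ) ^ 2)⁻¹ := by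
  have key : ∀ a b : ℝ,
      ((1 - Complex.exp (-Complex.I * ((a + b : ℝ) : ℂ)))⁻¹ *
        (1 - Complex.exp (-Complex.I * ((a - b : ℝ) : ℂ)))⁻¹) *
      ((1 - Complex.exp (-Complex.I * ((-a + -b : ℝ) : ℂ)))⁻¹ *
        (1 - Complex.exp (-Complex.I * ((-a - -b : ℝ) : ℂ)))⁻¹)
      = (((2 * (Real.cos a - Real.cos b) : ℝ) : ℂ) ^ 2)⁻¹ := by
    intro a b
    rw [← mul_inv, ← mul_inv, ← mul_inv]
    congr 1
    have ha := Complex.exp_ne_zero (Complex.I * a)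
    have hb := Complex.exp_ne_zero (Complex.I * b)
    have c : ∀ x : ℝ, Complex.cos x
        = (Complex.exp (Complex.I * x) + (Complex.exp (Complex.I * x))⁻¹) / 2 := by
      intro x
      rw [Complex.cos, ← Complex.exp_neg]
      congr 3 <;> ring_nf
    have e1 : Complex.exp (-Complex.I * ((a + b : ℝ) : ℂ))
        = (Complex.exp (Complex.I * a))⁻¹ * (Complex.exp (Complex.I * b))⁻¹ := by
      rw [← Complex.exp_neg, ← Complex.exp_neg, ← Complex.exp_add]; congr 1; push_cast; ring
    have e2 : Complex.exp (-Complex.I * ((a - b : ℝ) : ℂ))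
        = (Complex.exp (Complex.I * a))⁻¹ * (Complex.exp (Complex.I * b)) := by
      rw [← Complex.exp_neg, ← Complex.exp_add]; congr 1; push_cast; ring
    have e3 : Complex.exp (-Complex.I * ((-a + -b : ℝ) : ℂ))
        = (Complex.exp (Complex.I * a)) * (Complex.exp (Complex.I * b)) := by
      rw [← Complex.exp_add]; congr 1; push_cast; ring
    have e4 : Complex.exp (-Complex.I * ((-a - -b : ℝ) : ℂ))
        = (Complex.exp (Complex.I * a)) * (Complex.exp (Complex.I * b))⁻¹ := by
      rw [← Complex.exp_neg, ← Complex.exp_add]; congr 1; push_cast; ring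
    rw [e1, e2, e3, e4]
    push_cast
    rw [c, c]
    field_simp
    ring
  unfold CC VV
  push_cast
  rw [mul_mul_mul_comm, ← Finset.prod_mul_distrib]
  congr 1
  simp only [← Finset.prod_mul_distrib, ← Finset.prod_pow, ← Finset.prod_inv_distrib]
  refine Finset.prod_congr rfl fun j _ => Finset.prod_congr rfl fun k _ => ?_
  have := key (ξ j) (ξ k)
  push_cast at this
  exact this

/-- The strictly decreasing sequence `j ↦ λ_j + (n - 1 - j)` attached to a partition. -/
def shiftLam {m n : ℕ} (lam : Lam m n) :
    {s : Fin n → Fin (m + n - 1 + 1) // StrictAnti s} :=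
  ⟨fun j => ⟨(lam.1 j : ℕ) + (n - 1 - (j : ℕ)), by omega⟩, fun j k hjk => by
    have h := lam.2 j k hjk.le
    simp only [Fin.lt_def, Fin.le_def] at h hjk ⊢
    omega⟩

/-- The inverse subtracts the staircase: a strictly decreasing sequence in `{0, …, m + n - 1}` has
`n - 1 - j ≤ s j ≤ m + n - 1 - j`. -/
lemma shiftLam_bijective {m n : ℕ} :
    Function.Bijective (shiftLam : Lam m n → _) := by
  constructor
  · intro a b h
    have h' := congrArg Subtype.val h
    refine Subtype.ext (funext fun j => Fin.ext ?_)
    have := congrArg Fin.val (congrFun h' j)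
    simp only [shiftLam] at this
    omega
  · rintro ⟨s, hs⟩
    have gap : ∀ d : ℕ, ∀ j k : Fin n, (k : ℕ) = j + d → (s k : ℕ) + d ≤ s j := by
      intro d
      induction d with
      | zero =>
        intro j k h
        obtain rfl : k = j := Fin.ext (by omega)
        omega
      | succ d ih =>
        intro j k h
        have h1 := ih j ⟨j + d, by omega⟩ rfl
        have h2 : s k < s ⟨j + d, by omega⟩ := hs (by simp only [Fin.lt_def]; omega)
        simp only [Fin.lt_def] at h2
        omega
    have lo : ∀ j : Fin n, n - 1 - (j : ℕ) ≤ s j := fun j => by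
      have hj := j.isLt
      have := gap (n - 1 - j) j ⟨n - 1, by omega⟩ (by simp only; omega)
      omega
    have hi : ∀ j : Fin n, (s j : ℕ) + j ≤ m + n - 1 := fun j => by
      have hj := j.isLt
      have h1 := gap j ⟨0, by omega⟩ j (by simp)
      have h2 := (s ⟨0, by omega⟩).isLt
      omega
    refine ⟨⟨fun j => ⟨(s j : ℕ) - (n - 1 - j), by have := hi j; omega⟩, ?_⟩, ?_⟩
    · intro j k hjk
      have h1 := gap (k - j) j k (by simp only [Fin.le_def] at hjk; omega)
      simp only [Fin.le_def] at hjk ⊢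
      omega
    · refine Subtype.ext (funext fun j => Fin.ext ?_)
      have := lo j
      simp only [shiftLam]
      omega

/-- Only the last part of `λ` can shift to `0` and only the first to `m + n - 1`, so the product of
the one-variable norms is the norm attached to `λ`. -/
lemma prod_nrm {m n : ℕ} (hn : 1 ≤ n) (am ap : ℝ) (lam : Lam m n) :
    ∏ j, nrm am ap (m + n - 1) ((shiftLam lam).1 j) = (ΔLam m n hn am ap lam)⁻¹ := by
  unfold nrm ΔLam
  rw [Finset.prod_mul_distrib, mul_inv, inv_inv, inv_inv]
  congr 1
  · rw [Finset.prod_eq_single (⟨n - 1, by omega⟩ : Fin n)]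
    · simp [shiftLam]
    · intro j _ hj
      have : (j : ℕ) ≠ n - 1 := fun h => hj (Fin.ext h)
      have : (lam.1 j : ℕ) + (n - 1 - (j : ℕ)) ≠ 0 := by omega
      rw [if_neg (show ((shiftLam lam).1 j : ℕ) ≠ 0 from this)]; ring
    · simp
  · rw [Finset.prod_eq_single (⟨0, by omega⟩ : Fin n)]
    · have : ((lam.1 ⟨0, by omega⟩ : ℕ) + (n - 1 - 0) = m + n - 1)
          = ((lam.1 ⟨0, by omega⟩ : ℕ) = m) := by
        apply propext; omega
      simp only [shiftLam, this]
    · intro j _ hj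
      have : (j : ℕ) ≠ 0 := fun h => hj (Fin.ext h)
      have : (lam.1 j : ℕ) + (n - 1 - (j : ℕ)) ≠ m + n - 1 := by
        have := (lam.1 j).isLt
        omega
      rw [if_neg (show ((shiftLam lam).1 j : ℕ) ≠ m + n - 1 from this)]; ring
    · simp

theorem stmt19 (m n : ℕ) (hm : 1 ≤ m) (hn : 1 ≤ n) (pm qm pp qp : ℝ)
    (h1 : -1 < pm) (h2 : pm ≤ qm) (h3 : qm < 1)
    (h4 : -1 < pp) (h5 : pp ≤ qp) (h6 : qp < 1)
    (am bm ap bp : ℝ) (ham : am = pm * qm) (hbm : bm = pm + qm)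
    (hap : ap = pp * qp) (hbp : bp = pp + qp)
    (ξhat : ℕ → ℝ)
    (hξ : ∀ i : ℕ, i ≤ m + n - 1 →
      2*((m:ℝ)+n-1)*(ξhat i) + v pm (ξhat i) + v qm (ξhat i) + v pp (ξhat i) + v qp (ξhat i)
        = 2*Real.pi*((i : ℝ) + 1)) :
    ∀ lam mu : Lam m n,
      (∑ lamh : Lam m n,
          ((Pgen am bm m n lam (xiVec m n ξhat lamh) : ℝ) : ℂ) *
            ((Pgen am bm m n mu (xiVec m n ξhat lamh) : ℝ) : ℂ) *
              ΔhatLam m n pm qm pp qp ξhat lamh)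
        = if mu = lam then (((ΔLam m n hn am ap lam)⁻¹ : ℝ) : ℂ) else 0 := by
  intro lam mu
  subst ham hbm hap hbp
  have a1 : -1 < qm := by linarith
  have a2 : pm < 1 := by linarith
  have a3 : -1 < qp := by linarith
  have a4 : pp < 1 := by linarith
  have hMc : ((m + n - 1 : ℕ) : ℝ) = (m : ℝ) + n - 1 := by
    rw [Nat.cast_sub (by omega)]; push_cast; ring
  have h : ∀ i ≤ m + n - 1, 2 * ((m + n - 1 : ℕ) : ℝ) * ξhat i + v pm (ξhat i) + v qm (ξhat i)
      + v pp (ξhat i) + v qp (ξhat i) = 2 * Real.pi * ((i : ℝ) + 1) := fun i hi => by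
    rw [hMc]; exact hξ i hi
  have hcos : ∀ i j : ℕ, i ≤ m + n - 1 → j ≤ m + n - 1 → i ≠ j →
      Real.cos (ξhat i) ≠ Real.cos (ξhat j) := by
    intro i j hi hj hij e
    obtain ⟨b1, b2⟩ := node_mem h1 a2 a1 h3 h4 a4 a3 h6 _ i hi (ξhat i) (h i hi)
    obtain ⟨b3, b4⟩ := node_mem h1 a2 a1 h3 h4 a4 a3 h6 _ j hj (ξhat j) (h j hj)
    have e' := Real.injOn_cos ⟨b1.le, b2.le⟩ ⟨b3.le, b4.le⟩ e
    have hi' := h i hi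
    rw [e', h j hj] at hi'
    have := mul_left_cancel₀ (by positivity : 2 * Real.pi ≠ 0) hi'
    exact hij (by exact_mod_cast (add_right_cancel this).symm)
  have D := sum_minors
    (Matrix.of fun l i : Fin (m + n - 1 + 1) =>
      ((bs (pm * qm) (pm + qm) (l : ℕ) (ξhat i) : ℝ) : ℂ))
    (fun i => (cAmp pm qm (ξhat i) * cAmp pm qm (-ξhat i)
      * (Hw (m + n - 1) pm qm pp qp (ξhat i) : ℝ))⁻¹)
    (fun l => ((nrm (pm * qm) (pp * qp) (m + n - 1) l : ℝ) : ℂ))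
    (dual_orth h1 a2 a1 h3 h4 a4 a3 h6 (m + n - 1) (by omega) ξhat h hcos)
    (shiftLam lam).1 (shiftLam mu).1 (shiftLam lam).2 (shiftLam mu).2
  have hiff : ((shiftLam mu).1 = (shiftLam lam).1) = (mu = lam) := propext
    ⟨fun e => shiftLam_bijective.1 (Subtype.ext e), fun e => by rw [e]⟩
  rw [← Complex.ofReal_prod, prod_nrm hn] at D
  simp only [hiff] at D
  rw [← D, ← shiftLam_bijective.sum_comp]
  refine Finset.sum_congr rfl fun t _ => ?_
  have hVV : ((VV (xiVec m n ξhat t) : ℝ) : ℂ) ≠ 0 := by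
    rw [Complex.ofReal_ne_zero]
    refine Finset.prod_ne_zero_iff.mpr fun j _ => Finset.prod_ne_zero_iff.mpr fun k hk => ?_
    refine mul_ne_zero two_ne_zero (sub_ne_zero.mpr ?_)
    have hjk : j ≠ k := (Finset.mem_Ioi.mp hk).ne
    refine hcos _ _ (Nat.lt_succ_iff.mp ((shiftLam t).1 j).isLt)
      (Nat.lt_succ_iff.mp ((shiftLam t).1 k).isLt) fun e => ?_
    exact hjk ((shiftLam t).2.injective (Fin.ext e))
  have hP : ∀ ν : Lam m n, ((Pgen (pm * qm) (pm + qm) m n ν (xiVec m n ξhat t) : ℝ) : ℂ)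
      = ((Matrix.of fun l i : Fin (m + n - 1 + 1) =>
      ((bs (pm * qm) (pm + qm) (l : ℕ) (ξhat i) : ℝ) : ℂ)).submatrix
        (shiftLam ν).1 (shiftLam t).1).det / ((VV (xiVec m n ξhat t) : ℝ) : ℂ) := by
    intro ν
    rw [Pgen, Complex.ofReal_div]
    congr 1
    change Complex.ofRealHom _ = _
    rw [RingHom.map_det]
    congr 1
    ext j k
    have e : (n : ℤ) - 1 - (j : ℕ) + ((ν.1 j : ℕ) : ℤ) = (((shiftLam ν).1 j : ℕ) : ℤ) := by
      have := j.isLt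
      simp only [shiftLam]
      omega
    simp only [RingHom.mapMatrix_apply, Matrix.map_apply, Matrix.of_apply, e,
      Matrix.submatrix_apply]
    rfl
  have hΔ : ΔhatLam m n pm qm pp qp ξhat t = ((VV (xiVec m n ξhat t) : ℝ) : ℂ) ^ 2 *
      ∏ k, (cAmp pm qm (ξhat ((shiftLam t).1 k)) * cAmp pm qm (-ξhat ((shiftLam t).1 k))
      * (Hw (m + n - 1) pm qm pp qp (ξhat ((shiftLam t).1 k)) : ℝ))⁻¹ := by
    rw [ΔhatLam, CC_mul_CC_neg, Hmn, Complex.ofReal_prod, mul_right_comm,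
      ← Finset.prod_mul_distrib, mul_inv, inv_inv, ← Finset.prod_inv_distrib, mul_comm]
    rfl
  rw [hP, hP, hΔ]
  field_simp
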